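/- Let C be a 2-reduced cocommutative dg coalgebra over ℚ with universal twisting chain t : C ⇝ ΩC. For left dg ΩC-modules A and B, endow the tensor product A ⊗ B with the ΩC-action determined on generators by tc·(a ⊗ b) = (tc·a) ⊗ b + (−1)^{|a|(|c|−1)} a ⊗ (tc·b). Then there is an isomorphism of C-comodules, natural in A and B: (C ⊗^t A) □_C (C ⊗^t B) ≅ C ⊗^t (A ⊗ B); that is, the cotensor product of twisted coextensions is the twisted coextension of the tensor product. -/

import Mathlib

open scoped TensorProduct

noncomputable section

/-- A homologically graded differential graded `ℚ`-vector space (chain complex of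
`ℚ`-vector spaces presented as a graded module with a degree `-1` square-zero differential). -/
structure DGVect : Type 1 where
  carrier : Type
  [isAddCommGroup : AddCommGroup carrier]
  [isModule : Module ℚ carrier]
  grading : ℤ → Submodule ℚ carrier
  [isDecomp : DirectSum.Decomposition grading]
  d : carrier →ₗ[ℚ] carrier
  d_mem : ∀ (n : ℤ), ∀ x ∈ grading n, d x ∈ grading (n - 1)
  d_sq : d.comp d = 0

attribute [instance] DGVect.isAddCommGroup DGVect.isModule DGVect.isDecomp

/-- The operator acting on the degree `n` graded component by `(-1)^(k*n)`. -/
def signOpOf {V : Type} [AddCommGroup V] [Module ℚ V] (g : ℤ → Submodule ℚ V)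
    [DirectSum.Decomposition g] (k : ℤ) : V →ₗ[ℚ] V :=
  (DirectSum.toModule ℚ ℤ V fun n => ((-1 : ℚ) ^ (k * n)) • (g n).subtype).comp
    (DirectSum.decomposeLinearEquiv g).toLinearMap

/-- The Koszul parity operator, acting by `(-1)^n` in degree `n`. -/
def parityOf {V : Type} [AddCommGroup V] [Module ℚ V] (g : ℤ → Submodule ℚ V)
    [DirectSum.Decomposition g] : V →ₗ[ℚ] V := signOpOf g 1

def DGVect.parity (V : DGVect) : V.carrier →ₗ[ℚ] V.carrier := parityOf V.grading

/-- A graded object is bounded below if it vanishes in all sufficiently negative degrees. -/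
def DGVect.BoundedBelow (V : DGVect) : Prop := ∃ b : ℤ, ∀ n : ℤ, n < b → V.grading n = ⊥

/-- The Koszul signed braiding `v ⊗ w ↦ (-1)^{|v||w|} w ⊗ v` of graded vector spaces. -/
def kSwapOf {V W : Type} [AddCommGroup V] [Module ℚ V] [AddCommGroup W] [Module ℚ W]
    (gV : ℤ → Submodule ℚ V) (gW : ℤ → Submodule ℚ W)
    [DirectSum.Decomposition gV] [DirectSum.Decomposition gW] :
    V ⊗[ℚ] W →ₗ[ℚ] W ⊗[ℚ] V :=
  TensorProduct.lift
    ((DirectSum.toModule ℚ ℤ (W →ₗ[ℚ] W ⊗[ℚ] V) (fun i =>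
        (((DirectSum.toModule ℚ ℤ (V →ₗ[ℚ] W ⊗[ℚ] V) (fun j =>
              ((-1 : ℚ) ^ (i * j)) • ((TensorProduct.mk ℚ W V).comp (gW j).subtype))).comp
            (DirectSum.decomposeLinearEquiv gW).toLinearMap).flip).comp
          (gV i).subtype)).comp
      (DirectSum.decomposeLinearEquiv gV).toLinearMap)

/-- The degree `n` part of the tensor product grading:
the span of the homogeneous tensors of total degree `n`. -/
def tensorGrading {V W : Type} [AddCommGroup V] [Module ℚ V] [AddCommGroup W] [Module ℚ W]
    (gV : ℤ → Submodule ℚ V) (gW : ℤ → Submodule ℚ W) (n : ℤ) : Submodule ℚ (V ⊗[ℚ] W) :=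
  ⨆ p : {p : ℤ × ℤ // p.1 + p.2 = n},
    LinearMap.range (TensorProduct.map (gV p.1.1).subtype (gW p.1.2).subtype)

/-- `f` is a quasi-isomorphism from the complex `(V, dV)` to the complex `(W, dW)`:
it induces a bijection on homology (`ker d / im d`). -/
def IsQuasiIso {V W : Type} [AddCommGroup V] [Module ℚ V] [AddCommGroup W] [Module ℚ W]
    (dV : V →ₗ[ℚ] V) (dW : W →ₗ[ℚ] W) (f : V →ₗ[ℚ] W) : Prop :=
  (∀ x : V, dV x = 0 → (∃ y, f x = dW y) → ∃ z, x = dV z) ∧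
  (∀ w : W, dW w = 0 → ∃ x, dV x = 0 ∧ ∃ y, w - f x = dW y)

/-- A differential graded algebra over `ℚ`. -/
structure DGAlgebra extends DGVect where
  mul : carrier →ₗ[ℚ] carrier →ₗ[ℚ] carrier
  one : carrier
  one_mem : one ∈ grading 0
  mul_mem : ∀ (i j : ℤ) (x y : carrier), x ∈ grading i → y ∈ grading j →
    mul x y ∈ grading (i + j)
  mul_assoc' : ∀ x y z : carrier, mul (mul x y) z = mul x (mul y z)
  one_mul' : ∀ x : carrier, mul one x = x
  mul_one' : ∀ x : carrier, mul x one = x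
  leibniz : ∀ (i : ℤ) (x y : carrier), x ∈ grading i →
    d (mul x y) = mul (d x) y + ((-1 : ℚ) ^ i) • mul x (d y)

/-- The multiplication of a dg algebra as a map out of the tensor product. -/
def DGAlgebra.mulMap (A : DGAlgebra) : A.carrier ⊗[ℚ] A.carrier →ₗ[ℚ] A.carrier :=
  TensorProduct.lift A.mul

/-- A dg algebra is connective if it is concentrated in non-negative degrees. -/
def DGAlgebra.Connective (A : DGAlgebra) : Prop := ∀ n : ℤ, n < 0 → A.grading n = ⊥

/-- A (coassociative counital) differential graded coalgebra over `ℚ`,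
non-negatively graded. -/
structure DGCoalgebra extends DGVect where
  comul : carrier →ₗ[ℚ] carrier ⊗[ℚ] carrier
  counit : carrier →ₗ[ℚ] ℚ
  nonneg : ∀ n : ℤ, n < 0 → grading n = ⊥
  comul_mem : ∀ (n : ℤ), ∀ x ∈ grading n, comul x ∈ tensorGrading grading grading n
  counit_zero : ∀ (n : ℤ), n ≠ 0 → ∀ x ∈ grading n, counit x = 0
  coassoc : (TensorProduct.assoc ℚ carrier carrier carrier).toLinearMap.comp
      ((TensorProduct.map comul LinearMap.id).comp comul)
      = (TensorProduct.map LinearMap.id comul).comp comul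
  counit_comul_left : (TensorProduct.lid ℚ carrier).toLinearMap.comp
      ((TensorProduct.map counit LinearMap.id).comp comul) = LinearMap.id
  counit_comul_right : (TensorProduct.rid ℚ carrier).toLinearMap.comp
      ((TensorProduct.map LinearMap.id counit).comp comul) = LinearMap.id
  comul_chain : comul.comp d
      = (TensorProduct.map d LinearMap.id + TensorProduct.map (parityOf grading) d).comp comul
  counit_chain : counit.comp d = 0

/-- Cocommutativity: the comultiplication is invariant under the Koszul signed twist. -/
def DGCoalgebra.Cocomm (C : DGCoalgebra) : Prop :=
  (kSwapOf C.grading C.grading).comp C.comul = C.comul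

/-- A coaugmented dg coalgebra: a dg coalgebra with a coaugmentation `η : ℚ → C`,
recorded by the grouplike element `one = η 1` in degree `0`. -/
structure CoaugDGCoalgebra extends DGCoalgebra where
  one : carrier
  one_mem : one ∈ grading 0
  counit_one : counit one = 1
  comul_one : comul one = one ⊗ₜ[ℚ] one

/-- A coaugmented dg coalgebra is 2-reduced if `C₀ = ℚ` (spanned by the coaugmentation)
and `C₁ = 0`. -/
def CoaugDGCoalgebra.TwoReduced (C : CoaugDGCoalgebra) : Prop :=
  C.grading 0 = Submodule.span ℚ {C.one} ∧ C.grading 1 = ⊥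

/-- A twisting chain `τ : C ⇝ A`: a degree `-1` linear map satisfying
`d(τc) = -τ(dc) - (-1)^{|c₍₀₎|} τ(c₍₀₎)·τ(c₍₁₎)`. -/
structure TwistingChain (C : DGCoalgebra) (A : DGAlgebra) where
  toFun : C.carrier →ₗ[ℚ] A.carrier
  mem : ∀ (n : ℤ), ∀ x ∈ C.grading n, toFun x ∈ A.grading (n - 1)
  twist : A.d.comp toFun + toFun.comp C.d
      + A.mulMap.comp ((TensorProduct.map (toFun.comp (parityOf C.grading)) toFun).comp C.comul)
      = 0

/-- A left dg module over a dg algebra. -/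
structure DGModule (A : DGAlgebra) extends DGVect where
  smul : A.carrier →ₗ[ℚ] carrier →ₗ[ℚ] carrier
  smul_mem : ∀ (i j : ℤ) (a : A.carrier) (x : carrier), a ∈ A.grading i → x ∈ grading j →
    smul a x ∈ grading (i + j)
  one_smul' : ∀ x : carrier, smul A.one x = x
  mul_smul' : ∀ (a b : A.carrier) (x : carrier), smul (A.mul a b) x = smul a (smul b x)
  leibniz : ∀ (i : ℤ) (a : A.carrier) (x : carrier), a ∈ A.grading i →
    d (smul a x) = smul (A.d a) x + ((-1 : ℚ) ^ i) • smul a (d x)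

/-- The action of a dg module as a map out of the tensor product. -/
def DGModule.actionMap {A : DGAlgebra} (M : DGModule A) :
    A.carrier ⊗[ℚ] M.carrier →ₗ[ℚ] M.carrier := TensorProduct.lift M.smul

/-- A left dg comodule over a dg coalgebra. -/
structure DGComodule (C : DGCoalgebra) extends DGVect where
  coact : carrier →ₗ[ℚ] C.carrier ⊗[ℚ] carrier
  coact_mem : ∀ (n : ℤ), ∀ x ∈ grading n, coact x ∈ tensorGrading C.grading grading n
  coassoc : (TensorProduct.assoc ℚ C.carrier C.carrier carrier).toLinearMap.comp
      ((TensorProduct.map C.comul LinearMap.id).comp coact)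
      = (TensorProduct.map LinearMap.id coact).comp coact
  counit_coact : (TensorProduct.lid ℚ carrier).toLinearMap.comp
      ((TensorProduct.map C.counit LinearMap.id).comp coact) = LinearMap.id
  coact_chain : coact.comp d
      = (TensorProduct.map C.d LinearMap.id + TensorProduct.map (parityOf C.grading) d).comp coact

/-- Morphisms of dg modules: degree `0` graded chain maps commuting with the action. -/
def IsModuleHom (A : DGAlgebra) (M M' : DGModule A)
    (g : M.carrier →ₗ[ℚ] M'.carrier) : Prop :=
  (∀ (n : ℤ), ∀ x ∈ M.grading n, g x ∈ M'.grading n) ∧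
  g.comp M.d = M'.d.comp g ∧
  g.comp M.actionMap = M'.actionMap.comp (TensorProduct.map LinearMap.id g)

/-- Morphisms of dg comodules: degree `0` graded chain maps commuting with the coaction. -/
def IsComoduleHom (C : DGCoalgebra) (N N' : DGComodule C)
    (f : N.carrier →ₗ[ℚ] N'.carrier) : Prop :=
  (∀ (n : ℤ), ∀ x ∈ N.grading n, f x ∈ N'.grading n) ∧
  f.comp N.d = N'.d.comp f ∧
  (TensorProduct.map LinearMap.id f).comp N.coact = N'.coact.comp f

/-- The `A`-action on a twisted extension `A ⊗_τ N`: multiplication on the first factor. -/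
def extAction (A : DGAlgebra) (N : Type) [AddCommGroup N] [Module ℚ N] :
    A.carrier ⊗[ℚ] (A.carrier ⊗[ℚ] N) →ₗ[ℚ] A.carrier ⊗[ℚ] N :=
  (TensorProduct.map A.mulMap LinearMap.id).comp
    (TensorProduct.assoc ℚ A.carrier A.carrier N).symm.toLinearMap

/-- The differential of the twisted extension `A ⊗_τ N`:
`d(a ⊗ n) = da ⊗ n + (-1)^{|a|} a ⊗ dn - (-1)^{|a|} a·τ(n₍₀₎) ⊗ n₍₁₎`
for a `C`-comodule `(N, dN, ρ)`. -/
def extDiff (C : DGCoalgebra) (A : DGAlgebra) (τ : TwistingChain C A)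
    (N : Type) [AddCommGroup N] [Module ℚ N]
    (dN : N →ₗ[ℚ] N) (ρ : N →ₗ[ℚ] C.carrier ⊗[ℚ] N) :
    A.carrier ⊗[ℚ] N →ₗ[ℚ] A.carrier ⊗[ℚ] N :=
  TensorProduct.map A.d LinearMap.id + TensorProduct.map (parityOf A.grading) dN
    - (TensorProduct.map
        (A.mulMap.comp (TensorProduct.map (parityOf A.grading) τ.toFun)) LinearMap.id).comp
        ((TensorProduct.assoc ℚ A.carrier C.carrier N).symm.toLinearMap.comp
          (TensorProduct.map LinearMap.id ρ))

/-- The `C`-coaction on a twisted coextension `C ⊗^τ M`, namely `Δ ⊗ id`. -/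
def coextCoact (C : DGCoalgebra) (M : Type) [AddCommGroup M] [Module ℚ M] :
    C.carrier ⊗[ℚ] M →ₗ[ℚ] C.carrier ⊗[ℚ] (C.carrier ⊗[ℚ] M) :=
  (TensorProduct.assoc ℚ C.carrier C.carrier M).toLinearMap.comp
    (TensorProduct.map C.comul LinearMap.id)

/-- The differential of the twisted coextension `C ⊗^τ M`, expressed in terms of the map
`tact : C ⊗ M → M`, `c ⊗ m ↦ τ(c)·m`:
`d(c ⊗ m) = dc ⊗ m + (-1)^{|c|} c ⊗ dm + (-1)^{|c₍₀₎|} c₍₀₎ ⊗ τ(c₍₁₎)·m`. -/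
def coextDiffFrom (C : DGCoalgebra) (M : Type) [AddCommGroup M] [Module ℚ M]
    (dM : M →ₗ[ℚ] M) (tact : C.carrier ⊗[ℚ] M →ₗ[ℚ] M) :
    C.carrier ⊗[ℚ] M →ₗ[ℚ] C.carrier ⊗[ℚ] M :=
  TensorProduct.map C.d LinearMap.id + TensorProduct.map (parityOf C.grading) dM
    + (TensorProduct.map (parityOf C.grading) tact).comp (coextCoact C M)

/-- The differential of the twisted coextension `C ⊗^τ M` of an `A`-module `(M, dM, act)`. -/
def coextDiff (C : DGCoalgebra) (A : DGAlgebra) (τ : TwistingChain C A)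
    (M : Type) [AddCommGroup M] [Module ℚ M]
    (dM : M →ₗ[ℚ] M) (act : A.carrier ⊗[ℚ] M →ₗ[ℚ] M) :
    C.carrier ⊗[ℚ] M →ₗ[ℚ] C.carrier ⊗[ℚ] M :=
  coextDiffFrom C M dM (act.comp (TensorProduct.map τ.toFun LinearMap.id))

/-- Morphisms of dg algebras. -/
structure DGAlgebraHom (A B : DGAlgebra) where
  toLinearMap : A.carrier →ₗ[ℚ] B.carrier
  mem : ∀ (n : ℤ), ∀ x ∈ A.grading n, toLinearMap x ∈ B.grading n
  chain : toLinearMap.comp A.d = B.d.comp toLinearMap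
  map_one : toLinearMap A.one = B.one
  map_mul : ∀ x y : A.carrier, toLinearMap (A.mul x y) = B.mul (toLinearMap x) (toLinearMap y)

/-- Data exhibiting a dg algebra as the cobar construction `ΩC` of a coaugmented
dg coalgebra `C`, via the universal twisting chain `t : C ⇝ ΩC`:
dg algebra maps `ΩC → A` correspond bijectively to twisting chains `C ⇝ A`
vanishing on the coaugmentation. -/
structure CobarData (C : CoaugDGCoalgebra) where
  alg : DGAlgebra
  t : TwistingChain C.toDGCoalgebra alg
  t_one : t.toFun C.one = 0
  univ : ∀ (A : DGAlgebra) (τ : TwistingChain C.toDGCoalgebra A), τ.toFun C.one = 0 →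
    ∃! F : DGAlgebraHom alg A, F.toLinearMap.comp t.toFun = τ.toFun

/-- A morphism of `C`-comodules is a `t`-equivalence if the induced morphism of twisted
extensions `ΩC ⊗_t N → ΩC ⊗_t M` is a quasi-isomorphism. -/
def IsTEquiv (C : CoaugDGCoalgebra) (Ω : CobarData C) (N M : DGComodule C.toDGCoalgebra)
    (f : N.carrier →ₗ[ℚ] M.carrier) : Prop :=
  IsQuasiIso (extDiff C.toDGCoalgebra Ω.alg Ω.t N.carrier N.d N.coact)
    (extDiff C.toDGCoalgebra Ω.alg Ω.t M.carrier M.d M.coact)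
    (TensorProduct.map LinearMap.id f)

/-! ## Statement 11: cotensor product of twisted coextensions -/

/-- The differential of the twisted coextension `C ⊗^t A` of an `ΩC`-module `A`. -/
def coextD (C : CoaugDGCoalgebra) (Ω : CobarData C) (A : DGModule Ω.alg) :
    C.carrier ⊗[ℚ] A.carrier →ₗ[ℚ] C.carrier ⊗[ℚ] A.carrier :=
  coextDiff C.toDGCoalgebra Ω.alg Ω.t A.carrier A.d A.actionMap

/-- The right `C`-coaction on `C ⊗^t A` obtained from the left one via the Koszul
signed twist (for cocommutative `C`): `c ⊗ a ↦ (-1)^{|c₍₁₎||a|} (c₍₀₎ ⊗ a) ⊗ c₍₁₎`. -/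
def coextRightCoact (C : CoaugDGCoalgebra) (Ω : CobarData C) (A : DGModule Ω.alg) :
    C.carrier ⊗[ℚ] A.carrier →ₗ[ℚ] (C.carrier ⊗[ℚ] A.carrier) ⊗[ℚ] C.carrier :=
  (TensorProduct.assoc ℚ C.carrier A.carrier C.carrier).symm.toLinearMap.comp
    ((TensorProduct.map LinearMap.id (kSwapOf C.grading A.grading)).comp
      (coextCoact C.toDGCoalgebra A.carrier))

/-- The two maps whose equaliser is the cotensor product `(C ⊗^t A) □_C (C ⊗^t B)`:
`ρ_M ⊗ id` and `id ⊗ ρ_N` (rearranged to land in `(M ⊗ C) ⊗ N`). -/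
def cotensorRel₁ (C : CoaugDGCoalgebra) (Ω : CobarData C) (A B : DGModule Ω.alg) :
    (C.carrier ⊗[ℚ] A.carrier) ⊗[ℚ] (C.carrier ⊗[ℚ] B.carrier) →ₗ[ℚ]
      ((C.carrier ⊗[ℚ] A.carrier) ⊗[ℚ] C.carrier) ⊗[ℚ] (C.carrier ⊗[ℚ] B.carrier) :=
  TensorProduct.map (coextRightCoact C Ω A)
    (LinearMap.id : C.carrier ⊗[ℚ] B.carrier →ₗ[ℚ] C.carrier ⊗[ℚ] B.carrier)

def cotensorRel₂ (C : CoaugDGCoalgebra) (Ω : CobarData C) (A B : DGModule Ω.alg) :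
    (C.carrier ⊗[ℚ] A.carrier) ⊗[ℚ] (C.carrier ⊗[ℚ] B.carrier) →ₗ[ℚ]
      ((C.carrier ⊗[ℚ] A.carrier) ⊗[ℚ] C.carrier) ⊗[ℚ] (C.carrier ⊗[ℚ] B.carrier) :=
  (TensorProduct.assoc ℚ (C.carrier ⊗[ℚ] A.carrier) C.carrier
      (C.carrier ⊗[ℚ] B.carrier)).symm.toLinearMap.comp
    (TensorProduct.map LinearMap.id (coextCoact C.toDGCoalgebra B.carrier))

/-- The cotensor product `(C ⊗^t A) □_C (C ⊗^t B)`: the equaliser of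
`ρ_M ⊗ id` and `id ⊗ ρ_N`. -/
def cotensor (C : CoaugDGCoalgebra) (Ω : CobarData C) (A B : DGModule Ω.alg) :
    Submodule ℚ ((C.carrier ⊗[ℚ] A.carrier) ⊗[ℚ] (C.carrier ⊗[ℚ] B.carrier)) :=
  LinearMap.eqLocus (cotensorRel₁ C Ω A B) (cotensorRel₂ C Ω A B)

/-- The differential of `(C ⊗^t A) ⊗ (C ⊗^t B)`. -/
def cotDiff (C : CoaugDGCoalgebra) (Ω : CobarData C) (A B : DGModule Ω.alg) :
    (C.carrier ⊗[ℚ] A.carrier) ⊗[ℚ] (C.carrier ⊗[ℚ] B.carrier) →ₗ[ℚ]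
      (C.carrier ⊗[ℚ] A.carrier) ⊗[ℚ] (C.carrier ⊗[ℚ] B.carrier) :=
  TensorProduct.map (coextD C Ω A) LinearMap.id
    + TensorProduct.map (TensorProduct.map (parityOf C.grading) (parityOf A.grading))
        (coextD C Ω B)

/-- The action `tc · (a ⊗ b) = (tc·a) ⊗ b + (-1)^{|a|(|c|-1)} a ⊗ (tc·b)` of the
generators of `ΩC` on `A ⊗ B`, packaged as a map `C ⊗ (A ⊗ B) → A ⊗ B`. -/
def diagTAct (C : CoaugDGCoalgebra) (Ω : CobarData C) (A B : DGModule Ω.alg) :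
    C.carrier ⊗[ℚ] (A.carrier ⊗[ℚ] B.carrier) →ₗ[ℚ] A.carrier ⊗[ℚ] B.carrier :=
  (TensorProduct.map (A.actionMap.comp (TensorProduct.map Ω.t.toFun LinearMap.id))
      LinearMap.id).comp
      (TensorProduct.assoc ℚ C.carrier A.carrier B.carrier).symm.toLinearMap
    + (TensorProduct.map (parityOf A.grading)
        (B.actionMap.comp (TensorProduct.map Ω.t.toFun LinearMap.id))).comp
        ((TensorProduct.assoc ℚ A.carrier C.carrier B.carrier).toLinearMap.comp
          ((TensorProduct.map (kSwapOf C.grading A.grading) LinearMap.id).comp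
            (TensorProduct.assoc ℚ C.carrier A.carrier B.carrier).symm.toLinearMap))

/-- The differential of the twisted coextension `C ⊗^t (A ⊗ B)`, where `A ⊗ B` carries
the `ΩC`-action determined on generators by
`tc·(a ⊗ b) = (tc·a) ⊗ b + (-1)^{|a|(|c|-1)} a ⊗ (tc·b)`. -/
def diagCoextD (C : CoaugDGCoalgebra) (Ω : CobarData C) (A B : DGModule Ω.alg) :
    C.carrier ⊗[ℚ] (A.carrier ⊗[ℚ] B.carrier) →ₗ[ℚ]
      C.carrier ⊗[ℚ] (A.carrier ⊗[ℚ] B.carrier) :=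
  coextDiffFrom C.toDGCoalgebra (A.carrier ⊗[ℚ] B.carrier)
    (TensorProduct.map A.d LinearMap.id + TensorProduct.map (parityOf A.grading) B.d)
    (diagTAct C Ω A B)

/-- The `C`-coaction on `(C ⊗^t A) ⊗ (C ⊗^t B)` through the first factor. -/
def cotCoact (C : CoaugDGCoalgebra) (Ω : CobarData C) (A B : DGModule Ω.alg) :
    (C.carrier ⊗[ℚ] A.carrier) ⊗[ℚ] (C.carrier ⊗[ℚ] B.carrier) →ₗ[ℚ]
      C.carrier ⊗[ℚ] ((C.carrier ⊗[ℚ] A.carrier) ⊗[ℚ] (C.carrier ⊗[ℚ] B.carrier)) :=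
  (TensorProduct.assoc ℚ C.carrier (C.carrier ⊗[ℚ] A.carrier)
      (C.carrier ⊗[ℚ] B.carrier)).toLinearMap.comp
    (TensorProduct.map (coextCoact C.toDGCoalgebra A.carrier) LinearMap.id)

/-!
As a comodule `C ⊗^t B` is cofree, so `M □_C (C ⊗^t B) ≅ M ⊗ B` for every right comodule `M`: the
coaction of `M` maps `M ⊗ B` onto the cotensor product, and the counit of the second copy of `C` is
its inverse. For `M = C ⊗^t A` this comparison is `c ⊗ a ⊗ b ↦ ± (c₍₀₎ ⊗ a) ⊗ (c₍₁₎ ⊗ b)`, so it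
remains to compare the coactions and the differentials, for homogeneous `a` and up to Koszul signs.
The comparison only moves `c₍₁₎` past `a`; for the term in which the twisting chain acts on `a`, one
has to exchange the two adjacent tensor factors of `C` that `t` and `c₍₁₎` receive, which is where
cocommutativity enters.
-/

section TensorProduct

variable {R V W X Y : Type*} [CommSemiring R] [AddCommMonoid V] [Module R V]
  [AddCommMonoid W] [Module R W] [AddCommMonoid X] [Module R X] [AddCommMonoid Y] [Module R Y]

/-- The map `v ↦ v ⊗ x`; maps out of `V ⊗ X` are studied by composing with it, so that the
variable in `V` need not be named. -/
abbrev tmulRight (x : X) : V →ₗ[R] V ⊗[R] X := (TensorProduct.mk R V X).flip x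

theorem map_comp_tmulRight (f : V →ₗ[R] W) (g : X →ₗ[R] Y) (x : X) :
    TensorProduct.map f g ∘ₗ tmulRight x = tmulRight (g x) ∘ₗ f := rfl

theorem assoc_comp_tmulRight (x : X) :
    (TensorProduct.assoc R V W X).toLinearMap ∘ₗ tmulRight x = (tmulRight x).lTensor V := by
  ext; rfl

theorem assoc_symm_comp_lTensor_mk (w : W) :
    (TensorProduct.assoc R V W X).symm.toLinearMap ∘ₗ (TensorProduct.mk R W X w).lTensor V =
      (tmulRight w).rTensor X := by
  ext; rfl

theorem rTensor_comp_assoc (f : V →ₗ[R] Y) :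
    f.rTensor (W ⊗[R] X) ∘ₗ (TensorProduct.assoc R V W X).toLinearMap =
      (TensorProduct.assoc R Y W X).toLinearMap ∘ₗ (f.rTensor W).rTensor X := by
  ext; rfl

end TensorProduct

section Transport

variable {R M M' X X' : Type*} [CommSemiring R] [AddCommMonoid M] [Module R M]
  [AddCommMonoid M'] [Module R M'] [AddCommMonoid X] [Module R X] [AddCommMonoid X'] [Module R X']
  {N : Submodule R M} {N' : Submodule R M'}

theorem exists_restrict_comp_eq_of_symm (e : N ≃ₗ[R] X) (e' : N' ≃ₗ[R] X') {F : M →ₗ[R] M'}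
    {G : X →ₗ[R] X'}
    (h : F ∘ₗ N.subtype ∘ₗ e.symm.toLinearMap = (N'.subtype ∘ₗ e'.symm.toLinearMap) ∘ₗ G) :
    ∃ hF : ∀ m ∈ N, F m ∈ N', e'.toLinearMap ∘ₗ F.restrict hF = G ∘ₗ e.toLinearMap := by
  have hF (m : N) : F m = e'.symm (G (e m)) := by simpa using LinearMap.congr_fun h (e m)
  refine ⟨fun m hm => hF ⟨m, hm⟩ ▸ (e'.symm _).2, LinearMap.ext fun m => ?_⟩
  rw [LinearMap.comp_apply, LinearEquiv.coe_coe, ← e'.eq_symm_apply]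
  exact Subtype.ext (hF m)

theorem exists_lTensor_subtype_comp_eq_of_symm {C : Type*} [AddCommMonoid C] [Module R C]
    (e : N ≃ₗ[R] X) {ρ : M →ₗ[R] C ⊗[R] M} {δ : X →ₗ[R] C ⊗[R] X}
    (h : ρ ∘ₗ N.subtype ∘ₗ e.symm.toLinearMap =
      (N.subtype ∘ₗ e.symm.toLinearMap).lTensor C ∘ₗ δ) :
    ∃ ρN : N →ₗ[R] C ⊗[R] N, N.subtype.lTensor C ∘ₗ ρN = ρ ∘ₗ N.subtype ∧
      e.toLinearMap.lTensor C ∘ₗ ρN = δ ∘ₗ e.toLinearMap := by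
  refine ⟨e.symm.toLinearMap.lTensor C ∘ₗ δ ∘ₗ e.toLinearMap, LinearMap.ext fun m => ?_, ?_⟩
  · simpa [LinearMap.lTensor_comp_apply] using (LinearMap.congr_fun h (e m)).symm
  · rw [← LinearMap.comp_assoc, ← LinearMap.lTensor_comp, LinearEquiv.comp_symm,
      LinearMap.lTensor_id, LinearMap.id_comp]

end Transport

/-- The map `c ↦ f c₍₀₎ ⊗ g c₍₁₎` in Sweedler notation, written `f ⋆ g`. -/
def mapComul {R C X Y : Type*} [CommSemiring R] [AddCommMonoid C] [Module R C] [Coalgebra R C]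
    [AddCommMonoid X] [Module R X] [AddCommMonoid Y] [Module R Y] (f : C →ₗ[R] X) (g : C →ₗ[R] Y) :
    C →ₗ[R] X ⊗[R] Y :=
  TensorProduct.map f g ∘ₗ Coalgebra.comul

local infixr:75 " ⋆ " => mapComul

section MapComul

open Coalgebra

variable {R C X Y Z X' Y' : Type*} [CommSemiring R] [AddCommMonoid C] [Module R C]
  [Coalgebra R C] [AddCommMonoid X] [Module R X] [AddCommMonoid Y] [Module R Y]
  [AddCommMonoid Z] [Module R Z] [AddCommMonoid X'] [Module R X'] [AddCommMonoid Y'] [Module R Y']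

theorem map_comp_mapComul (p : X →ₗ[R] X') (q : Y →ₗ[R] Y') (f : C →ₗ[R] X) (g : C →ₗ[R] Y) :
    TensorProduct.map p q ∘ₗ (f ⋆ g) = (p ∘ₗ f) ⋆ (q ∘ₗ g) := by
  rw [mapComul, mapComul, TensorProduct.map_comp, LinearMap.comp_assoc]

theorem lTensor_comp_mapComul (q : Y →ₗ[R] Y') (f : C →ₗ[R] X) (g : C →ₗ[R] Y) :
    q.lTensor X ∘ₗ (f ⋆ g) = f ⋆ (q ∘ₗ g) :=
  map_comp_mapComul .id q f g

theorem rTensor_comp_mapComul (p : X →ₗ[R] X') (f : C →ₗ[R] X) (g : C →ₗ[R] Y) :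
    p.rTensor Y ∘ₗ (f ⋆ g) = (p ∘ₗ f) ⋆ g :=
  map_comp_mapComul p .id f g

theorem assoc_comp_mapComul_mapComul (f : C →ₗ[R] X) (g : C →ₗ[R] Y) (h : C →ₗ[R] Z) :
    (TensorProduct.assoc R X Y Z).toLinearMap ∘ₗ ((f ⋆ g) ⋆ h) = f ⋆ g ⋆ h := by
  ext c
  have hc := congrArg (TensorProduct.map f (TensorProduct.map g h)) (coassoc_apply (R := R) c)
  rw [TensorProduct.map_map_assoc, LinearMap.map_rTensor, LinearMap.map_lTensor] at hc
  exact hc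

theorem rid_comp_mapComul_counit (f : C →ₗ[R] X) :
    (TensorProduct.rid R X).toLinearMap ∘ₗ (f ⋆ counit) = f := by
  have hrid : (TensorProduct.rid R X).toLinearMap ∘ₗ f.rTensor R =
      f ∘ₗ (TensorProduct.rid R C).toLinearMap := by ext; simp
  calc (TensorProduct.rid R X).toLinearMap ∘ₗ (f ⋆ counit)
    _ = (TensorProduct.rid R X).toLinearMap ∘ₗ f.rTensor R ∘ₗ counit.lTensor C ∘ₗ comul := by
      rw [mapComul, ← LinearMap.rTensor_comp_lTensor, LinearMap.comp_assoc]
    _ = f := by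
      rw [← LinearMap.comp_assoc, hrid]
      ext c
      simp

theorem mapComul_add (f : C →ₗ[R] X) (g h : C →ₗ[R] Y) : f ⋆ (g + h) = f ⋆ g + f ⋆ h := by
  simp only [mapComul, TensorProduct.map_add_right, LinearMap.add_comp]

theorem add_mapComul (f g : C →ₗ[R] X) (h : C →ₗ[R] Y) : (f + g) ⋆ h = f ⋆ h + g ⋆ h := by
  simp only [mapComul, TensorProduct.map_add_left, LinearMap.add_comp]

theorem mapComul_smul (r : R) (f : C →ₗ[R] X) (g : C →ₗ[R] Y) : f ⋆ (r • g) = r • (f ⋆ g) := by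
  simp only [mapComul, TensorProduct.map_smul_right, LinearMap.smul_comp]

theorem smul_mapComul (r : R) (f : C →ₗ[R] X) (g : C →ₗ[R] Y) : (r • f) ⋆ g = r • (f ⋆ g) := by
  simp only [mapComul, TensorProduct.map_smul_left, LinearMap.smul_comp]

end MapComul

section CofreeComodule

open Coalgebra

variable {R C M B : Type*} [CommSemiring R] [AddCommMonoid C] [Module R C]
  [Coalgebra R C] [AddCommMonoid M] [Module R M] [AddCommMonoid B] [Module R B]

/-- `ρ` is a coassociative and counital right coaction of `C` on `M`. -/
structure IsRightCoaction (ρ : M →ₗ[R] M ⊗[R] C) : Prop where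
  assoc_rTensor_comp : (TensorProduct.assoc R M C C).toLinearMap ∘ₗ ρ.rTensor C ∘ₗ ρ =
    comul.lTensor M ∘ₗ ρ
  rid_lTensor_counit_comp : (TensorProduct.rid R M).toLinearMap ∘ₗ counit.lTensor M ∘ₗ ρ = .id

variable (R C B) in
/-- The left coaction `Δ ⊗ id` on the cofree comodule `C ⊗ B`. -/
def cofreeCoaction : C ⊗[R] B →ₗ[R] C ⊗[R] (C ⊗[R] B) :=
  TensorProduct.assoc R C C B ∘ₗ (comul (R := R)).rTensor B

variable (B) in
/-- The cotensor product `M □_C (C ⊗ B)` of a right comodule with a cofree left comodule. -/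
def cofreeCotensor (ρ : M →ₗ[R] M ⊗[R] C) : Submodule R (M ⊗[R] (C ⊗[R] B)) :=
  LinearMap.eqLocus (ρ.rTensor (C ⊗[R] B))
    ((TensorProduct.assoc R M C (C ⊗[R] B)).symm.toLinearMap ∘ₗ (cofreeCoaction R C B).lTensor M)

variable (B) in
/-- The coaction of `M`, viewed as the map `M ⊗ B → M □_C (C ⊗ B)` and extended to the ambient
tensor product. -/
def cofreeComparison (ρ : M →ₗ[R] M ⊗[R] C) : M ⊗[R] B →ₗ[R] M ⊗[R] (C ⊗[R] B) :=
  (TensorProduct.assoc R M C B).toLinearMap ∘ₗ ρ.rTensor B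

variable (R C M B) in
/-- The map `m ⊗ c ⊗ b ↦ ε(c) m ⊗ b`, whose restriction to the cotensor product inverts
`cofreeComparison`. -/
def counitContraction : M ⊗[R] (C ⊗[R] B) →ₗ[R] M ⊗[R] B :=
  ((TensorProduct.lid R B).toLinearMap ∘ₗ (counit (R := R) (A := C)).rTensor B).lTensor M

theorem counitContraction_comp_assoc :
    counitContraction R C M B ∘ₗ (TensorProduct.assoc R M C B).toLinearMap =
      ((TensorProduct.rid R M).toLinearMap ∘ₗ (counit (R := R)).lTensor M).rTensor B := by
  ext m c b
  simp [counitContraction, TensorProduct.smul_tmul]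

theorem assoc_counitContraction_cofreeCoaction (x : M ⊗[R] (C ⊗[R] B)) :
    TensorProduct.assoc R M C B (counitContraction R C (M ⊗[R] C) B
      ((TensorProduct.assoc R M C (C ⊗[R] B)).symm ((cofreeCoaction R C B).lTensor M x))) = x := by
  suffices h : (TensorProduct.assoc R M C B).toLinearMap ∘ₗ counitContraction R C (M ⊗[R] C) B ∘ₗ
        (TensorProduct.assoc R M C (C ⊗[R] B)).symm.toLinearMap ∘ₗ
          (cofreeCoaction R C B).lTensor M = LinearMap.id from LinearMap.congr_fun h x
  have hcontract (m : M) (b : B) (w : C ⊗[R] C) :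
      TensorProduct.assoc R M C B (counitContraction R C (M ⊗[R] C) B
          ((TensorProduct.assoc R M C (C ⊗[R] B)).symm
            (m ⊗ₜ TensorProduct.assoc R C C B (w ⊗ₜ b)))) =
        m ⊗ₜ (TensorProduct.rid R C (counit.lTensor C w) ⊗ₜ b) := by
    induction w with
    | zero => simp
    | tmul x y => simp [counitContraction, ← TensorProduct.smul_tmul', TensorProduct.tmul_smul]
    | add x y hx hy => simp only [TensorProduct.tmul_add, TensorProduct.add_tmul, map_add, hx, hy]
  ext m c b
  simp [cofreeCoaction, hcontract]

theorem assoc_counitContraction_rTensor (ρ : M →ₗ[R] M ⊗[R] C) (x : M ⊗[R] (C ⊗[R] B)) :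
    TensorProduct.assoc R M C B (counitContraction R C (M ⊗[R] C) B (ρ.rTensor (C ⊗[R] B) x)) =
      cofreeComparison B ρ (counitContraction R C M B x) := by
  suffices h : (TensorProduct.assoc R M C B).toLinearMap ∘ₗ counitContraction R C (M ⊗[R] C) B ∘ₗ
        ρ.rTensor (C ⊗[R] B) = cofreeComparison B ρ ∘ₗ counitContraction R C M B from
    LinearMap.congr_fun h x
  ext m c b
  simp [counitContraction, cofreeComparison]

theorem lTensor_cofreeCoaction_assoc (z : (M ⊗[R] C) ⊗[R] B) :
    (TensorProduct.assoc R M C (C ⊗[R] B)).symm ((cofreeCoaction R C B).lTensor M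
        (TensorProduct.assoc R M C B z)) =
      TensorProduct.assoc R (M ⊗[R] C) C B
        (((TensorProduct.assoc R M C C).symm.toLinearMap ∘ₗ
          (comul (R := R)).lTensor M).rTensor B z) := by
  suffices h : (TensorProduct.assoc R M C (C ⊗[R] B)).symm.toLinearMap ∘ₗ
        (cofreeCoaction R C B).lTensor M ∘ₗ (TensorProduct.assoc R M C B).toLinearMap =
      (TensorProduct.assoc R (M ⊗[R] C) C B).toLinearMap ∘ₗ
        ((TensorProduct.assoc R M C C).symm.toLinearMap ∘ₗ
          (comul (R := R)).lTensor M).rTensor B from LinearMap.congr_fun h z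
  ext m c b
  simp only [cofreeCoaction, TensorProduct.AlgebraTensorModule.curry_apply,
    TensorProduct.curry_apply, LinearMap.comp_apply, LinearMap.lTensor_tmul,
    LinearMap.rTensor_tmul, LinearEquiv.coe_coe, TensorProduct.assoc_tmul,
    LinearMap.restrictScalars_self]
  generalize (comul (R := R) c) = w
  induction w with
  | zero => simp
  | tmul x y => simp
  | add x y hx hy => simp only [TensorProduct.tmul_add, TensorProduct.add_tmul, map_add, hx, hy]

variable {ρ : M →ₗ[R] M ⊗[R] C}

theorem cofreeComparison_mem_cofreeCotensor (hρ : IsRightCoaction ρ) (x : M ⊗[R] B) :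
    cofreeComparison B ρ x ∈ cofreeCotensor B ρ := by
  have hcoassoc : (TensorProduct.assoc R M C C).symm.toLinearMap ∘ₗ
      (comul (R := R)).lTensor M ∘ₗ ρ = ρ.rTensor C ∘ₗ ρ :=
    (LinearEquiv.toLinearMap_symm_comp_eq _ _).2 hρ.assoc_rTensor_comp.symm
  calc
    ρ.rTensor (C ⊗[R] B) (cofreeComparison B ρ x)
      = TensorProduct.assoc R (M ⊗[R] C) C B ((ρ.rTensor C ∘ₗ ρ).rTensor B x) := by
        rw [LinearMap.rTensor_comp_apply]
        exact LinearMap.congr_fun (rTensor_comp_assoc ρ) (ρ.rTensor B x)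
    _ = (TensorProduct.assoc R M C (C ⊗[R] B)).symm
          ((cofreeCoaction R C B).lTensor M (cofreeComparison B ρ x)) := by
        rw [← hcoassoc, ← LinearMap.comp_assoc, LinearMap.rTensor_comp_apply]
        exact (lTensor_cofreeCoaction_assoc _).symm

theorem counitContraction_cofreeComparison (hρ : IsRightCoaction ρ) (x : M ⊗[R] B) :
    counitContraction R C M B (cofreeComparison B ρ x) = x := by
  calc
    counitContraction R C M B (cofreeComparison B ρ x)
      = ((TensorProduct.rid R M).toLinearMap ∘ₗ (counit (R := R)).lTensor M ∘ₗ ρ).rTensor B x := by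
        rw [← LinearMap.comp_assoc, LinearMap.rTensor_comp_apply]
        exact LinearMap.congr_fun counitContraction_comp_assoc (ρ.rTensor B x)
    _ = x := by rw [hρ.rid_lTensor_counit_comp, LinearMap.rTensor_id_apply]

theorem cofreeComparison_counitContraction {x : M ⊗[R] (C ⊗[R] B)} (hx : x ∈ cofreeCotensor B ρ) :
    cofreeComparison B ρ (counitContraction R C M B x) = x := by
  have hx' : ρ.rTensor (C ⊗[R] B) x = (TensorProduct.assoc R M C (C ⊗[R] B)).symm
      ((cofreeCoaction R C B).lTensor M x) := hx
  rw [← assoc_counitContraction_rTensor, hx', assoc_counitContraction_cofreeCoaction]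

variable (B) in
/-- The isomorphism `M □_C (C ⊗ B) ≃ M ⊗ B`. -/
def cofreeCotensorEquiv (hρ : IsRightCoaction ρ) : cofreeCotensor B ρ ≃ₗ[R] M ⊗[R] B :=
  LinearEquiv.ofLinearMap ((counitContraction R C M B).domRestrict _)
    ((cofreeComparison B ρ).codRestrict _ (cofreeComparison_mem_cofreeCotensor hρ))
    (LinearMap.ext (counitContraction_cofreeComparison hρ))
    (LinearMap.ext fun x => Subtype.ext (cofreeComparison_counitContraction x.2))

end CofreeComodule

section KoszulSigns

variable {V W X : Type} [AddCommGroup V] [Module ℚ V] [AddCommGroup W] [Module ℚ W]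
  [AddCommGroup X] [Module ℚ X]
  {gV : ℤ → Submodule ℚ V} {gW : ℤ → Submodule ℚ W} {gX : ℤ → Submodule ℚ X}
  [DirectSum.Decomposition gV] [DirectSum.Decomposition gW] [DirectSum.Decomposition gX]

theorem signOpOf_apply_of_mem (k : ℤ) {n : ℤ} {x : V} (hx : x ∈ gV n) :
    signOpOf gV k x = (-1 : ℚ) ^ (k * n) • x := by
  lift x to gV n using hx
  simp [signOpOf]

theorem parityOf_apply_of_mem {n : ℤ} {x : V} (hx : x ∈ gV n) :
    parityOf gV x = (-1 : ℚ) ^ n • x := by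
  rw [parityOf, signOpOf_apply_of_mem 1 hx, one_mul]

theorem kSwapOf_tmul_of_mem {i j : ℤ} {x : V} {y : W} (hx : x ∈ gV i) (hy : y ∈ gW j) :
    kSwapOf gV gW (x ⊗ₜ y) = (-1 : ℚ) ^ (i * j) • (y ⊗ₜ x) := by
  lift x to gV i using hx
  lift y to gW j using hy
  simp [kSwapOf]

theorem signOpOf_comp_of_forall_mem (k : ℤ) {m : ℤ} {f : V →ₗ[ℚ] W}
    (hf : ∀ n, ∀ x ∈ gV n, f x ∈ gW (n + m)) :
    signOpOf gW k ∘ₗ f = (-1 : ℚ) ^ (k * m) • (f ∘ₗ signOpOf gV k) := by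
  refine DirectSum.decompose_lhom_ext gV fun n => LinearMap.ext fun x => ?_
  simp [signOpOf_apply_of_mem k (hf n x x.2), signOpOf_apply_of_mem k x.2, mul_add, zpow_add₀,
    smul_smul, mul_comm]

theorem signOpOf_comp_signOpOf (k l : ℤ) :
    signOpOf gV k ∘ₗ signOpOf gV l = signOpOf gV (k + l) := by
  refine DirectSum.decompose_lhom_ext gV fun n => LinearMap.ext fun x => ?_
  simp [signOpOf_apply_of_mem _ x.2, add_mul, zpow_add₀, smul_smul, mul_comm ((-1 : ℚ) ^ (l * n))]

theorem map_signOpOf_apply_of_mem_tensorGrading (k : ℤ) {n : ℤ} {z : V ⊗[ℚ] W}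
    (hz : z ∈ tensorGrading gV gW n) :
    TensorProduct.map (signOpOf gV k) (signOpOf gW k) z = (-1 : ℚ) ^ (k * n) • z := by
  suffices h : tensorGrading gV gW n ≤ LinearMap.eqLocus
      (TensorProduct.map (signOpOf gV k) (signOpOf gW k)) ((-1 : ℚ) ^ (k * n) • LinearMap.id) from
    h hz
  refine iSup_le ?_
  rintro ⟨⟨i, j⟩, rfl⟩ _ ⟨w, rfl⟩
  induction w with
  | zero => simp
  | tmul x y =>
    simp [signOpOf_apply_of_mem k x.2, signOpOf_apply_of_mem k y.2, mul_add, zpow_add₀,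
      ← TensorProduct.smul_tmul', smul_smul, mul_comm]
  | add x y hx hy => rw [map_add]; exact add_mem hx hy

theorem kSwapOf_comp_tmulRight {j : ℤ} {y : W} (hy : y ∈ gW j) :
    kSwapOf gV gW ∘ₗ tmulRight y = TensorProduct.mk ℚ W V y ∘ₗ signOpOf gV j := by
  refine DirectSum.decompose_lhom_ext gV fun i => LinearMap.ext fun x => ?_
  simp [kSwapOf_tmul_of_mem x.2 hy, signOpOf_apply_of_mem j x.2, mul_comm]

theorem kSwapOf_comp_map {V' : Type} [AddCommGroup V'] [Module ℚ V'] {gV' : ℤ → Submodule ℚ V'}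
    [DirectSum.Decomposition gV'] {m : ℤ} {h : V →ₗ[ℚ] V'} {f : W →ₗ[ℚ] X}
    (hh : ∀ n, ∀ x ∈ gV n, h x ∈ gV' n) (hf : ∀ n, ∀ x ∈ gW n, f x ∈ gX (n + m)) :
    kSwapOf gV' gX ∘ₗ TensorProduct.map h f =
      TensorProduct.map f (h ∘ₗ signOpOf gV m) ∘ₗ kSwapOf gV gW := by
  refine TensorProduct.ext (DirectSum.decompose_lhom_ext gV fun i => LinearMap.ext fun x =>
    DirectSum.decompose_lhom_ext gW fun j => LinearMap.ext fun y => ?_)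
  simp [kSwapOf_tmul_of_mem x.2 y.2, kSwapOf_tmul_of_mem (hh i x x.2) (hf j y y.2),
    signOpOf_apply_of_mem m x.2, mul_add, zpow_add₀, smul_smul, mul_comm]

variable (gV) {Y Y' Z : Type*} [AddCommMonoid Y] [Module ℚ Y] [AddCommMonoid Y'] [Module ℚ Y']
  [AddCommMonoid Z] [Module ℚ Z]

theorem ext_tmulRight_of_homogeneous {f f' : Y ⊗[ℚ] V →ₗ[ℚ] Z}
    (h : ∀ j, ∀ v ∈ gV j, f ∘ₗ tmulRight v = f' ∘ₗ tmulRight v) : f = f' :=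
  TensorProduct.ext <| LinearMap.flip_inj <|
    DirectSum.decompose_lhom_ext gV fun j => LinearMap.ext fun v => h j v v.2

theorem ext_tmulRight_tmul_of_homogeneous {f f' : Y ⊗[ℚ] (V ⊗[ℚ] Y') →ₗ[ℚ] Z}
    (h : ∀ j, ∀ v ∈ gV j, ∀ y, f ∘ₗ tmulRight (v ⊗ₜ y) = f' ∘ₗ tmulRight (v ⊗ₜ y)) : f = f' :=
  TensorProduct.ext <| LinearMap.flip_inj <| TensorProduct.ext <|
    DirectSum.decompose_lhom_ext gV fun j => LinearMap.ext fun v => LinearMap.ext (h j v v.2)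

end KoszulSigns

section DGCoalgebra

/-- The coalgebra underlying a dg coalgebra. -/
instance DGCoalgebra.coalgebra (C : DGCoalgebra) : Coalgebra ℚ C.carrier where
  comul := C.comul
  counit := C.counit
  coassoc := C.coassoc
  rTensor_counit_comp_comul := (LinearEquiv.eq_toLinearMap_symm_comp _ _).2 C.counit_comul_left
  lTensor_counit_comp_comul := (LinearEquiv.eq_toLinearMap_symm_comp _ _).2 C.counit_comul_right

variable {C : DGCoalgebra} {M : Type} [AddCommGroup M] [Module ℚ M] {X Y : Type*}
  [AddCommMonoid X] [Module ℚ X] [AddCommMonoid Y] [Module ℚ Y]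

theorem comul_comp_signOpOf (k : ℤ) :
    C.comul ∘ₗ signOpOf C.grading k = signOpOf C.grading k ⋆ signOpOf C.grading k := by
  refine DirectSum.decompose_lhom_ext C.grading fun n => LinearMap.ext fun x => ?_
  exact Eq.trans (by simp [signOpOf_apply_of_mem k x.2])
    (map_signOpOf_apply_of_mem_tensorGrading k (C.comul_mem n x x.2)).symm

theorem counit_comp_signOpOf (k : ℤ) : C.counit ∘ₗ signOpOf C.grading k = C.counit := by
  refine DirectSum.decompose_lhom_ext C.grading fun n => LinearMap.ext fun x => ?_
  rcases eq_or_ne n 0 with rfl | hn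
  · simp [signOpOf_apply_of_mem k x.2]
  · simp [signOpOf_apply_of_mem k x.2, C.counit_zero n hn x x.2]

theorem signOpOf_comp_d (k : ℤ) :
    signOpOf C.grading k ∘ₗ C.d = (-1 : ℚ) ^ k • (C.d ∘ₗ signOpOf C.grading k) := by
  rw [signOpOf_comp_of_forall_mem k C.d_mem, mul_neg_one, zpow_neg, ← inv_zpow, inv_neg_one]

theorem mapComul_comp_signOpOf (k : ℤ) (f : C.carrier →ₗ[ℚ] X) (g : C.carrier →ₗ[ℚ] Y) :
    (f ⋆ g) ∘ₗ signOpOf C.grading k =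
      (f ∘ₗ signOpOf C.grading k) ⋆ (g ∘ₗ signOpOf C.grading k) := by
  rw [← map_comp_mapComul]
  exact congrArg (TensorProduct.map f g ∘ₗ ·) (comul_comp_signOpOf k)

theorem mapComul_comp_d (f : C.carrier →ₗ[ℚ] X) (g : C.carrier →ₗ[ℚ] Y) :
    (f ⋆ g) ∘ₗ C.d = (f ∘ₗ C.d) ⋆ g + (f ∘ₗ parityOf C.grading) ⋆ (g ∘ₗ C.d) := by
  rw [← LinearMap.comp_id g, ← map_comp_mapComul, ← map_comp_mapComul, LinearMap.comp_id,
    ← LinearMap.comp_add]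
  exact congrArg (TensorProduct.map f g ∘ₗ ·) C.comul_chain

theorem coextCoact_comp_tmulRight (m : M) :
    coextCoact C M ∘ₗ tmulRight m = .id ⋆ tmulRight m := by
  rw [coextCoact, LinearMap.comp_assoc, map_comp_tmulRight, ← LinearMap.comp_assoc]
  exact congrArg (· ∘ₗ C.comul) (assoc_comp_tmulRight m)

theorem coextCoact_comp_signOpOf_mapComul (k : ℤ) (f : C.carrier →ₗ[ℚ] M) :
    coextCoact C M ∘ₗ (signOpOf C.grading k ⋆ f) =
      signOpOf C.grading k ⋆ signOpOf C.grading k ⋆ f := by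
  rw [coextCoact, LinearMap.comp_assoc, map_comp_mapComul, comul_comp_signOpOf,
    assoc_comp_mapComul_mapComul, LinearMap.id_comp]

theorem DGCoalgebra.Cocomm.kSwapOf_comp_mapComul (hcc : C.Cocomm) {V W : Type} [AddCommGroup V]
    [Module ℚ V] [AddCommGroup W] [Module ℚ W] {gV : ℤ → Submodule ℚ V} {gW : ℤ → Submodule ℚ W}
    [DirectSum.Decomposition gV] [DirectSum.Decomposition gW] {m : ℤ} {h : C.carrier →ₗ[ℚ] V}
    {f : C.carrier →ₗ[ℚ] W} (hh : ∀ n, ∀ x ∈ C.grading n, h x ∈ gV n)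
    (hf : ∀ n, ∀ x ∈ C.grading n, f x ∈ gW (n + m)) :
    kSwapOf gV gW ∘ₗ (h ⋆ f) = f ⋆ (h ∘ₗ signOpOf C.grading m) := by
  rw [mapComul, ← LinearMap.comp_assoc, kSwapOf_comp_map hh hf, LinearMap.comp_assoc]
  exact congrArg (TensorProduct.map f _ ∘ₗ ·) hcc

end DGCoalgebra

section TwistedCoextension

variable {C : CoaugDGCoalgebra} {Ω : CobarData C} {A : DGModule Ω.alg} {j : ℤ} {a : A.carrier}

/-- The map `c ↦ t(c) · a`. -/
def twistAct (a : A.carrier) : C.carrier →ₗ[ℚ] A.carrier := A.smul.flip a ∘ₗ Ω.t.toFun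

theorem twistAct_mem (ha : a ∈ A.grading j) (n : ℤ) (c : C.carrier) (hc : c ∈ C.grading n) :
    twistAct a c ∈ A.grading (n + (j - 1)) := by
  have h := A.smul_mem (n - 1) j _ a (Ω.t.mem n c hc) ha
  rwa [sub_add_comm, add_comm] at h

theorem coextD_comp_tmulRight (a : A.carrier) :
    coextD C Ω A ∘ₗ tmulRight a = tmulRight a ∘ₗ C.d +
      tmulRight (A.d a) ∘ₗ parityOf C.grading + parityOf C.grading ⋆ twistAct a := by
  rw [coextD, coextDiff, coextDiffFrom, LinearMap.add_comp, LinearMap.add_comp, map_comp_tmulRight,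
    map_comp_tmulRight, LinearMap.comp_assoc, coextCoact_comp_tmulRight, map_comp_mapComul]
  rfl

theorem coextRightCoact_comp_tmulRight (ha : a ∈ A.grading j) :
    coextRightCoact C Ω A ∘ₗ tmulRight a = tmulRight a ⋆ signOpOf C.grading j := by
  rw [coextRightCoact, LinearMap.comp_assoc, LinearMap.comp_assoc, coextCoact_comp_tmulRight,
    map_comp_mapComul, kSwapOf_comp_tmulRight ha, ← lTensor_comp_mapComul,
    ← LinearMap.comp_assoc, assoc_symm_comp_lTensor_mk, rTensor_comp_mapComul]
  rfl

theorem coextRightCoact_comp_parityOf_mapComul_twistAct (hcc : C.Cocomm) (ha : a ∈ A.grading j) :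
    coextRightCoact C Ω A ∘ₗ (parityOf C.grading ⋆ twistAct a) =
      (parityOf C.grading ⋆ twistAct a) ⋆ signOpOf C.grading j := by
  have hparity (n : ℤ) (c) (hc : c ∈ C.grading n) : parityOf C.grading c ∈ C.grading n :=
    parityOf_apply_of_mem hc ▸ Submodule.smul_mem _ _ hc
  have hswap : kSwapOf C.grading A.grading ∘ₗ (parityOf C.grading ⋆ twistAct a) =
      twistAct a ⋆ signOpOf C.grading j := by
    rw [hcc.kSwapOf_comp_mapComul hparity (twistAct_mem ha), parityOf, signOpOf_comp_signOpOf,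
      add_sub_cancel]
  rw [coextRightCoact, LinearMap.comp_assoc, LinearMap.comp_assoc,
    LinearEquiv.toLinearMap_symm_comp_eq, assoc_comp_mapComul_mapComul, ← hswap]
  refine (congrArg (TensorProduct.map .id _ ∘ₗ ·)
    (coextCoact_comp_signOpOf_mapComul 1 (twistAct a))).trans ?_
  exact lTensor_comp_mapComul _ _ _

variable (A) in
theorem isRightCoaction_coextRightCoact : IsRightCoaction (coextRightCoact C Ω A) where
  assoc_rTensor_comp := by
    refine ext_tmulRight_of_homogeneous A.grading fun j a ha => ?_
    simp only [LinearMap.comp_assoc, coextRightCoact_comp_tmulRight ha,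
      rTensor_comp_mapComul, lTensor_comp_mapComul, assoc_comp_mapComul_mapComul]
    exact congrArg (tmulRight a ⋆ ·) (comul_comp_signOpOf j).symm
  rid_lTensor_counit_comp := by
    refine ext_tmulRight_of_homogeneous A.grading fun j a ha => ?_
    rw [LinearMap.comp_assoc, LinearMap.comp_assoc, coextRightCoact_comp_tmulRight ha,
      lTensor_comp_mapComul, show Coalgebra.counit ∘ₗ signOpOf C.grading j = Coalgebra.counit from
        counit_comp_signOpOf j, rid_comp_mapComul_counit, LinearMap.id_comp]

end TwistedCoextension

section Comparison

variable {C : CoaugDGCoalgebra} {Ω : CobarData C} (A B : DGModule Ω.alg)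

/-- The isomorphism `(C ⊗^t A) □_C (C ⊗^t B) ≃ C ⊗ (A ⊗ B)`, an instance of the computation of
cotensor products with the cofree comodule `C ⊗ B`. -/
def cotensorEquiv : cotensor C Ω A B ≃ₗ[ℚ] C.carrier ⊗[ℚ] (A.carrier ⊗[ℚ] B.carrier) :=
  cofreeCotensorEquiv B.carrier (isRightCoaction_coextRightCoact A) ≪≫ₗ
    TensorProduct.assoc ℚ C.carrier A.carrier B.carrier

/-- The map `c ⊗ a ⊗ b ↦ (-1)^{|c₍₁₎||a|} (c₍₀₎ ⊗ a) ⊗ (c₍₁₎ ⊗ b)`, the inverse of `cotensorEquiv`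
extended to the ambient tensor product. -/
def comparison : C.carrier ⊗[ℚ] (A.carrier ⊗[ℚ] B.carrier) →ₗ[ℚ]
    (C.carrier ⊗[ℚ] A.carrier) ⊗[ℚ] (C.carrier ⊗[ℚ] B.carrier) :=
  cofreeComparison B.carrier (coextRightCoact C Ω A) ∘ₗ
    (TensorProduct.assoc ℚ C.carrier A.carrier B.carrier).symm.toLinearMap

theorem subtype_comp_cotensorEquiv_symm :
    (cotensor C Ω A B).subtype ∘ₗ (cotensorEquiv A B).symm.toLinearMap = comparison A B := rfl

variable {A B} {j : ℤ} {a : A.carrier} (b : B.carrier)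

theorem comparison_comp_lTensor_tmulRight :
    comparison A B ∘ₗ (tmulRight b).lTensor C.carrier =
      (tmulRight b).lTensor (C.carrier ⊗[ℚ] A.carrier) ∘ₗ coextRightCoact C Ω A := by
  ext c a
  exact LinearMap.congr_fun (assoc_comp_tmulRight b) (coextRightCoact C Ω A (c ⊗ₜ a))

theorem comparison_comp_lTensor_mk (a : A.carrier) :
    comparison A B ∘ₗ (TensorProduct.mk ℚ A.carrier B.carrier a).lTensor C.carrier =
      (TensorProduct.assoc ℚ (C.carrier ⊗[ℚ] A.carrier) C.carrier B.carrier).toLinearMap ∘ₗ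
        (coextRightCoact C Ω A ∘ₗ tmulRight a).rTensor B.carrier := by
  ext c b
  rfl

theorem comparison_comp_tmulRight (ha : a ∈ A.grading j) :
    comparison A B ∘ₗ tmulRight (a ⊗ₜ b) = tmulRight a ⋆ (tmulRight b ∘ₗ signOpOf C.grading j) := by
  rw [← lTensor_comp_mapComul, ← coextRightCoact_comp_tmulRight ha, ← LinearMap.comp_assoc,
    ← comparison_comp_lTensor_tmulRight]
  rfl

theorem cotCoact_comp_comparison :
    cotCoact C Ω A B ∘ₗ comparison A B =
      (comparison A B).lTensor C.carrier ∘ₗ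
        coextCoact C.toDGCoalgebra (A.carrier ⊗[ℚ] B.carrier) := by
  refine ext_tmulRight_tmul_of_homogeneous A.grading fun j a ha b => ?_
  rw [LinearMap.comp_assoc, LinearMap.comp_assoc, coextCoact_comp_tmulRight, lTensor_comp_mapComul,
    comparison_comp_tmulRight b ha, cotCoact, LinearMap.comp_assoc, map_comp_mapComul,
    coextCoact_comp_tmulRight, assoc_comp_mapComul_mapComul, LinearMap.id_comp]

theorem map_comp_comparison {A' B' : DGModule Ω.alg} {f : A.carrier →ₗ[ℚ] A'.carrier}
    (hf : ∀ n, ∀ x ∈ A.grading n, f x ∈ A'.grading n) (g : B.carrier →ₗ[ℚ] B'.carrier) :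
    TensorProduct.map (TensorProduct.map .id f) (TensorProduct.map .id g) ∘ₗ comparison A B =
      comparison A' B' ∘ₗ TensorProduct.map .id (TensorProduct.map f g) := by
  refine ext_tmulRight_tmul_of_homogeneous A.grading fun j a ha b => ?_
  rw [LinearMap.comp_assoc, LinearMap.comp_assoc, comparison_comp_tmulRight b ha,
    map_comp_tmulRight, TensorProduct.map_tmul, ← LinearMap.comp_assoc,
    comparison_comp_tmulRight _ (hf j a ha), map_comp_mapComul]
  rfl

end Comparison

section Differential

variable {C : CoaugDGCoalgebra} {Ω : CobarData C} {A B : DGModule Ω.alg} {j : ℤ} {a : A.carrier}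
  (b : B.carrier)

theorem diagTAct_comp_tmulRight (ha : a ∈ A.grading j) :
    diagTAct C Ω A B ∘ₗ tmulRight (a ⊗ₜ b) = tmulRight b ∘ₗ twistAct a +
      (-1 : ℚ) ^ j • (TensorProduct.mk ℚ A.carrier B.carrier a ∘ₗ twistAct b ∘ₗ
        signOpOf C.grading j) := by
  ext c
  have hswap := LinearMap.congr_fun (kSwapOf_comp_tmulRight (gV := C.grading) ha) c
  simp only [LinearMap.comp_apply, LinearMap.flip_apply, TensorProduct.mk_apply] at hswap
  simp [diagTAct, twistAct, hswap, parityOf_apply_of_mem ha, DGModule.actionMap,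
    TensorProduct.smul_tmul']

theorem diagCoextD_comp_tmulRight (ha : a ∈ A.grading j) :
    diagCoextD C Ω A B ∘ₗ tmulRight (a ⊗ₜ b) =
      tmulRight (a ⊗ₜ b) ∘ₗ C.d + (tmulRight (A.d a ⊗ₜ b) ∘ₗ parityOf C.grading +
        (-1 : ℚ) ^ j • (tmulRight (a ⊗ₜ B.d b) ∘ₗ parityOf C.grading)) +
      (parityOf C.grading ⋆ (tmulRight b ∘ₗ twistAct a) +
        (-1 : ℚ) ^ j • (parityOf C.grading ⋆ (TensorProduct.mk ℚ A.carrier B.carrier a ∘ₗ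
          twistAct b ∘ₗ signOpOf C.grading j))) := by
  rw [diagCoextD, coextDiffFrom, LinearMap.add_comp, LinearMap.add_comp, map_comp_tmulRight,
    map_comp_tmulRight, LinearMap.comp_assoc, coextCoact_comp_tmulRight, map_comp_mapComul,
    diagTAct_comp_tmulRight b ha, mapComul_add, mapComul_smul, LinearMap.comp_id]
  congr 2
  ext c
  simp [parityOf_apply_of_mem ha, ← TensorProduct.smul_tmul']

theorem cotDiff_comp_tmulRight_mapComul (ha : a ∈ A.grading j)
    (g : C.carrier →ₗ[ℚ] C.carrier ⊗[ℚ] B.carrier) :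
    cotDiff C Ω A B ∘ₗ (tmulRight a ⋆ g) = (coextD C Ω A ∘ₗ tmulRight a) ⋆ g +
      (-1 : ℚ) ^ j • ((tmulRight a ∘ₗ parityOf C.grading) ⋆ (coextD C Ω B ∘ₗ g)) := by
  have hparity : TensorProduct.map (parityOf C.grading) (parityOf A.grading) ∘ₗ tmulRight a =
      (-1 : ℚ) ^ j • (tmulRight a ∘ₗ parityOf C.grading) := by
    rw [map_comp_tmulRight, parityOf_apply_of_mem ha]
    ext c
    simp
  rw [cotDiff, LinearMap.add_comp, map_comp_mapComul, map_comp_mapComul, hparity, smul_mapComul,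
    LinearMap.id_comp]

theorem comparison_comp_tmulRight_comp_d (ha : a ∈ A.grading j) :
    comparison A B ∘ₗ tmulRight (a ⊗ₜ b) ∘ₗ C.d =
      (tmulRight a ∘ₗ C.d) ⋆ (tmulRight b ∘ₗ signOpOf C.grading j) +
        (-1 : ℚ) ^ j • ((tmulRight a ∘ₗ parityOf C.grading) ⋆
          (tmulRight b ∘ₗ C.d ∘ₗ signOpOf C.grading j)) := by
  rw [← LinearMap.comp_assoc, comparison_comp_tmulRight b ha, mapComul_comp_d, LinearMap.comp_assoc,
    signOpOf_comp_d, LinearMap.comp_smul, mapComul_smul]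

theorem comparison_comp_tmulRight_comp_parityOf (ha : a ∈ A.grading j) :
    comparison A B ∘ₗ tmulRight (a ⊗ₜ b) ∘ₗ parityOf C.grading =
      (tmulRight a ∘ₗ parityOf C.grading) ⋆ (tmulRight b ∘ₗ signOpOf C.grading (j + 1)) := by
  rw [← LinearMap.comp_assoc, comparison_comp_tmulRight b ha, parityOf, mapComul_comp_signOpOf,
    LinearMap.comp_assoc, signOpOf_comp_signOpOf]

theorem comparison_comp_parityOf_mapComul_twistAct_left (hcc : C.Cocomm) (ha : a ∈ A.grading j) :
    comparison A B ∘ₗ (parityOf C.grading ⋆ (tmulRight b ∘ₗ twistAct a)) =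
      (parityOf C.grading ⋆ twistAct a) ⋆ (tmulRight b ∘ₗ signOpOf C.grading j) := by
  rw [← lTensor_comp_mapComul, ← LinearMap.comp_assoc, comparison_comp_lTensor_tmulRight,
    LinearMap.comp_assoc, coextRightCoact_comp_parityOf_mapComul_twistAct hcc ha,
    lTensor_comp_mapComul]

theorem comparison_comp_parityOf_mapComul_twistAct_right (ha : a ∈ A.grading j) :
    comparison A B ∘ₗ (parityOf C.grading ⋆ (TensorProduct.mk ℚ A.carrier B.carrier a ∘ₗ
        twistAct b ∘ₗ signOpOf C.grading j)) =
      (tmulRight a ∘ₗ parityOf C.grading) ⋆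
        ((parityOf C.grading ⋆ twistAct b) ∘ₗ signOpOf C.grading j) := by
  have hcomm : signOpOf C.grading j ∘ₗ parityOf C.grading =
      parityOf C.grading ∘ₗ signOpOf C.grading j := by
    rw [parityOf, signOpOf_comp_signOpOf, signOpOf_comp_signOpOf, add_comm]
  rw [← lTensor_comp_mapComul, ← LinearMap.comp_assoc, comparison_comp_lTensor_mk,
    coextRightCoact_comp_tmulRight ha, LinearMap.comp_assoc, rTensor_comp_mapComul, parityOf,
    mapComul_comp_signOpOf, assoc_comp_mapComul_mapComul, ← parityOf, hcomm,
    mapComul_comp_signOpOf]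

theorem coextD_comp_tmulRight_comp_signOpOf (k : ℤ) :
    coextD C Ω B ∘ₗ tmulRight b ∘ₗ signOpOf C.grading k =
      tmulRight b ∘ₗ C.d ∘ₗ signOpOf C.grading k +
        tmulRight (B.d b) ∘ₗ signOpOf C.grading (k + 1) +
          (parityOf C.grading ⋆ twistAct b) ∘ₗ signOpOf C.grading k := by
  rw [← LinearMap.comp_assoc, coextD_comp_tmulRight, LinearMap.add_comp, LinearMap.add_comp,
    LinearMap.comp_assoc, LinearMap.comp_assoc, parityOf, signOpOf_comp_signOpOf, add_comm 1]

theorem cotDiff_comp_comparison (hcc : C.Cocomm) :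
    cotDiff C Ω A B ∘ₗ comparison A B = comparison A B ∘ₗ diagCoextD C Ω A B := by
  refine ext_tmulRight_tmul_of_homogeneous A.grading fun j a ha b => ?_
  rw [LinearMap.comp_assoc, LinearMap.comp_assoc, comparison_comp_tmulRight b ha,
    cotDiff_comp_tmulRight_mapComul ha, coextD_comp_tmulRight, coextD_comp_tmulRight_comp_signOpOf,
    diagCoextD_comp_tmulRight b ha]
  simp only [LinearMap.comp_add, LinearMap.comp_smul, add_mapComul, mapComul_add, smul_add]
  rw [comparison_comp_tmulRight_comp_d b ha,
    comparison_comp_tmulRight_comp_parityOf b (A.d_mem j a ha),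
    comparison_comp_tmulRight_comp_parityOf (B.d b) ha, sub_add_cancel,
    comparison_comp_parityOf_mapComul_twistAct_left b hcc ha,
    comparison_comp_parityOf_mapComul_twistAct_right b ha]
  abel

end Differential

theorem cotensor_of_twisted_coextensions_general (C : CoaugDGCoalgebra)
    (hcc : C.toDGCoalgebra.Cocomm) (Ω : CobarData C) :
    ∃ e : ∀ A B : DGModule Ω.alg,
        ↥(cotensor C Ω A B) ≃ₗ[ℚ] (C.carrier ⊗[ℚ] (A.carrier ⊗[ℚ] B.carrier)),
      (∀ A B : DGModule Ω.alg,
        ∃ hD : ∀ x ∈ cotensor C Ω A B, cotDiff C Ω A B x ∈ cotensor C Ω A B,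
          (e A B).toLinearMap.comp ((cotDiff C Ω A B).restrict hD)
            = (diagCoextD C Ω A B).comp (e A B).toLinearMap) ∧
      (∀ A B : DGModule Ω.alg,
        ∃ ρcot : ↥(cotensor C Ω A B) →ₗ[ℚ] C.carrier ⊗[ℚ] ↥(cotensor C Ω A B),
          (TensorProduct.map LinearMap.id (cotensor C Ω A B).subtype).comp ρcot
              = (cotCoact C Ω A B).comp (cotensor C Ω A B).subtype ∧
          (TensorProduct.map LinearMap.id (e A B).toLinearMap).comp ρcot
            = (coextCoact C.toDGCoalgebra (A.carrier ⊗[ℚ] B.carrier)).comp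
                (e A B).toLinearMap) ∧
      (∀ (A B A' B' : DGModule Ω.alg) (f : A.carrier →ₗ[ℚ] A'.carrier)
          (g : B.carrier →ₗ[ℚ] B'.carrier),
        (∀ n, ∀ x ∈ A.grading n, f x ∈ A'.grading n) →
        ∃ hF : ∀ x ∈ cotensor C Ω A B,
            (TensorProduct.map (TensorProduct.map LinearMap.id f)
              (TensorProduct.map LinearMap.id g)) x ∈ cotensor C Ω A' B',
          (e A' B').toLinearMap.comp
              ((TensorProduct.map (TensorProduct.map LinearMap.id f)
                (TensorProduct.map LinearMap.id g)).restrict hF)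
            = (TensorProduct.map LinearMap.id (TensorProduct.map f g)).comp
                (e A B).toLinearMap) := by
  refine ⟨cotensorEquiv, fun A B => ?_, fun A B => ?_, fun A B A' B' f g hf => ?_⟩
  · apply exists_restrict_comp_eq_of_symm
    rw [subtype_comp_cotensorEquiv_symm, cotDiff_comp_comparison hcc]
  · apply exists_lTensor_subtype_comp_eq_of_symm
    rw [subtype_comp_cotensorEquiv_symm, cotCoact_comp_comparison]
  · apply exists_restrict_comp_eq_of_symm
    rw [subtype_comp_cotensorEquiv_symm, subtype_comp_cotensorEquiv_symm, map_comp_comparison hf]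

/-- For a 2-reduced cocommutative dg coalgebra `C` and left dg
`ΩC`-modules `A`, `B`, there is an isomorphism of `C`-comodules, natural in `A` and `B`,
`(C ⊗^t A) □_C (C ⊗^t B) ≅ C ⊗^t (A ⊗ B)`, where `A ⊗ B` carries the `ΩC`-action
determined on generators by `tc·(a ⊗ b) = (tc·a) ⊗ b + (-1)^{|a|(|c|-1)} a ⊗ (tc·b)`. -/
theorem cotensor_of_twisted_coextensions (C : CoaugDGCoalgebra) (hred : C.TwoReduced)
    (hcc : C.toDGCoalgebra.Cocomm) (Ω : CobarData C) :
    ∃ e : ∀ A B : DGModule Ω.alg,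
        ↥(cotensor C Ω A B) ≃ₗ[ℚ] (C.carrier ⊗[ℚ] (A.carrier ⊗[ℚ] B.carrier)),
      -- the isomorphism is a chain map:
      (∀ A B : DGModule Ω.alg,
        ∃ hD : ∀ x ∈ cotensor C Ω A B, cotDiff C Ω A B x ∈ cotensor C Ω A B,
          (e A B).toLinearMap.comp ((cotDiff C Ω A B).restrict hD)
            = (diagCoextD C Ω A B).comp (e A B).toLinearMap) ∧
      -- the isomorphism is colinear:
      (∀ A B : DGModule Ω.alg,
        ∃ ρcot : ↥(cotensor C Ω A B) →ₗ[ℚ] C.carrier ⊗[ℚ] ↥(cotensor C Ω A B),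
          (TensorProduct.map LinearMap.id (cotensor C Ω A B).subtype).comp ρcot
              = (cotCoact C Ω A B).comp (cotensor C Ω A B).subtype ∧
          (TensorProduct.map LinearMap.id (e A B).toLinearMap).comp ρcot
            = (coextCoact C.toDGCoalgebra (A.carrier ⊗[ℚ] B.carrier)).comp
                (e A B).toLinearMap) ∧
      -- and natural in `A` and `B`:
      (∀ (A B A' B' : DGModule Ω.alg) (f : A.carrier →ₗ[ℚ] A'.carrier)
          (g : B.carrier →ₗ[ℚ] B'.carrier),
        IsModuleHom Ω.alg A A' f → IsModuleHom Ω.alg B B' g →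
        ∃ hF : ∀ x ∈ cotensor C Ω A B,
            (TensorProduct.map (TensorProduct.map LinearMap.id f)
              (TensorProduct.map LinearMap.id g)) x ∈ cotensor C Ω A' B',
          (e A' B').toLinearMap.comp
              ((TensorProduct.map (TensorProduct.map LinearMap.id f)
                (TensorProduct.map LinearMap.id g)).restrict hF)
            = (TensorProduct.map LinearMap.id (TensorProduct.map f g)).comp
                (e A B).toLinearMap) := by
  obtain ⟨e, hchain, hcolin, hnat⟩ := cotensor_of_twisted_coextensions_general C hcc Ω
  exact ⟨e, hchain, hcolin, fun A B A' B' f g hf _ => hnat A B A' B' f g hf.1⟩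

end
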